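/- In 𝔽₂[t₁,…,t₈], the product ∏_{1≤j<k≤8} (1 + t_j + t_k) is congruent to (1 + e₄ + e₆ + e₇)⁴ modulo the ideal generated by e₁, e₂, e₃, e₅. -/

import Mathlib

open MvPolynomial Finset

/-- The `i`-th elementary symmetric polynomial in `𝔽₂[t₁,…,t₈]`. -/
noncomputable def e (i : ℕ) : MvPolynomial (Fin 8) (ZMod 2) :=
  esymm (Fin 8) (ZMod 2) i

/-- Over an algebraically closed field of characteristic two, the polynomial
`x⁸ + a x⁴ + b x² + c x + d` has eight roots `s i`, with the expected symmetric functions. -/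
lemma exists_roots {K : Type} [Field K] [IsAlgClosed K] [Algebra (ZMod 2) K] [CharP K 2]
    (a b c d : K) : ∃ s : Fin 8 → K,
      (∀ x, ∏ j, (x + s j) = x ^ 8 + a * x ^ 4 + b * x ^ 2 + c * x + d) ∧
      aeval s (e 1) = 0 ∧ aeval s (e 2) = 0 ∧ aeval s (e 3) = 0 ∧ aeval s (e 4) = a ∧
      aeval s (e 5) = 0 ∧ aeval s (e 6) = b ∧ aeval s (e 7) = c ∧ aeval s (e 8) = d := by
  set f : Polynomial K := Polynomial.X ^ 8 + Polynomial.C a * Polynomial.X ^ 4 +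
    Polynomial.C b * Polynomial.X ^ 2 + Polynomial.C c * Polynomial.X + Polynomial.C d with hf
  have hdeg : f.natDegree = 8 := by rw [hf]; compute_degree!
  have hmon : f.Monic := by rw [hf]; monicity!
  have hsp : f.Splits := IsAlgClosed.splits f
  have hcard : f.roots.card = 8 := by rw [← hsp.natDegree_eq_card_roots, hdeg]
  have hlen : f.roots.toList.length = 8 := by simpa using hcard
  obtain ⟨s, hs⟩ : ∃ s : Fin 8 → K, univ.val.map s = f.roots := by
    refine ⟨fun i => f.roots.toList.get (i.cast hlen.symm), ?_⟩
    rw [Fin.univ_val_map]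
    conv_rhs => rw [← Multiset.coe_toList f.roots]
    congr 1
    apply List.ext_get
    · simp [hcard]
    · intro n h1 h2
      simp only [List.get_eq_getElem, List.getElem_ofFn, Fin.val_cast]
  have hes : ∀ k ≤ 8, aeval s (e (8 - k)) = f.coeff k := by
    intro k hk
    rw [Polynomial.coeff_eq_esymm_roots_of_splits hsp (hdeg ▸ hk), hmon.leadingCoeff, hdeg, e,
      aeval_esymm_eq_multiset_esymm, hs, CharTwo.neg_eq]
    simp
  refine ⟨s, ?_, ?_⟩
  · intro x
    have h := hsp.eval_eq_prod_roots_of_monic hmon x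
    rw [← hs, Multiset.map_map] at h
    have h2 : f.eval x = x ^ 8 + a * x ^ 4 + b * x ^ 2 + c * x + d := by simp [hf]
    rw [← h2, h]
    simp [CharTwo.sub_eq_add, Finset.prod]
  · have h0 := hes 0 (by norm_num)
    have h1 := hes 1 (by norm_num)
    have h2 := hes 2 (by norm_num)
    have h3 := hes 3 (by norm_num)
    have h4 := hes 4 (by norm_num)
    have h5 := hes 5 (by norm_num)
    have h6 := hes 6 (by norm_num)
    have h7 := hes 7 (by norm_num)
    simp [hf, Polynomial.coeff_X, Polynomial.coeff_C, Polynomial.coeff_X_pow] at h0 h1 h2 h3 h4 h5 h6 h7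
    exact ⟨h7, h6, h5, h4, h3, h2, h1, h0⟩

/-- A product over all ordered pairs, in terms of pairs `j < k`. -/
lemma prod_all_pairs {M : Type} [CommMonoid M] (g : Fin 8 → Fin 8 → M)
    (hg : ∀ i j, g i j = g j i) (hd : ∀ i, g i i = 1) :
    ∏ i, ∏ j, g i j =
      (∏ p ∈ univ.filter (fun p : Fin 8 × Fin 8 => p.1 < p.2), g p.1 p.2) ^ 2 := by
  rw [← Fintype.prod_prod_type' g, ← Finset.prod_filter_mul_prod_filter_not univ
    (fun p : Fin 8 × Fin 8 => p.1 < p.2), sq]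
  congr 1
  rw [← Finset.prod_filter_mul_prod_filter_not (univ.filter fun p : Fin 8 × Fin 8 => ¬ p.1 < p.2)
    (fun p : Fin 8 × Fin 8 => p.1 = p.2)]
  rw [Finset.prod_eq_one (s := filter (fun p : Fin 8 × Fin 8 => p.1 = p.2) _), one_mul]
  · refine Finset.prod_nbij' Prod.swap Prod.swap ?_ ?_ ?_ ?_ ?_
    · intro p hp; simp at hp ⊢; omega
    · intro p hp; simp at hp ⊢; omega
    · simp
    · simp
    · intro p _; exact hg _ _
  · rintro ⟨p, q⟩ hp
    simp at hp
    rw [hp.2]; exact hd q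

lemma prod_pairs_perm {M : Type} [CommMonoid M] (g : Fin 8 → Fin 8 → M)
    (hg : ∀ i j, g i j = g j i) (σ : Equiv.Perm (Fin 8)) :
    (∏ p ∈ univ.filter (fun p : Fin 8 × Fin 8 => p.1 < p.2), g (σ p.1) (σ p.2)) =
      ∏ p ∈ univ.filter (fun p : Fin 8 × Fin 8 => p.1 < p.2), g p.1 p.2 := by
  refine Finset.prod_nbij'
    (fun p => if σ p.1 < σ p.2 then (σ p.1, σ p.2) else (σ p.2, σ p.1))
    (fun p => if σ.symm p.1 < σ.symm p.2 then (σ.symm p.1, σ.symm p.2)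
      else (σ.symm p.2, σ.symm p.1)) ?_ ?_ ?_ ?_ ?_
  · rintro ⟨i, j⟩ h
    simp only [mem_filter, mem_univ, true_and] at h ⊢
    have : σ i ≠ σ j := fun h' => h.ne (σ.injective h')
    split_ifs with h1
    · exact h1
    · exact lt_of_le_of_ne (not_lt.1 h1) this.symm
  · rintro ⟨i, j⟩ h
    simp only [mem_filter, mem_univ, true_and] at h ⊢
    have : σ.symm i ≠ σ.symm j := fun h' => h.ne (σ.symm.injective h')
    split_ifs with h1
    · exact h1
    · exact lt_of_le_of_ne (not_lt.1 h1) this.symm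
  · rintro ⟨i, j⟩ h
    simp only [mem_filter, mem_univ, true_and] at h
    by_cases h1 : σ i < σ j <;> simp [h1, h, h.not_gt]
  · rintro ⟨i, j⟩ h
    simp only [mem_filter, mem_univ, true_and] at h
    by_cases h1 : σ.symm i < σ.symm j <;> simp [h1, h, h.not_gt]
  · rintro ⟨i, j⟩ h
    by_cases h1 : σ i < σ j
    · simp [h1]
    · simp [h1, hg (σ i) (σ j)]

/-- The difference of the two sides. -/
noncomputable def lamDiff : MvPolynomial (Fin 8) (ZMod 2) :=
  (∏ p ∈ univ.filter (fun p : Fin 8 × Fin 8 => p.1 < p.2), (1 + X p.1 + X p.2))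
      - (1 + e 4 + e 6 + e 7) ^ 4

lemma lamDiff_symm : lamDiff.IsSymmetric := by
  intro σ
  have he : ∀ i, rename σ (e i) = e i := fun i => esymm_isSymmetric _ _ i σ
  have hP := prod_pairs_perm (fun i j => (1 + X i + X j : MvPolynomial (Fin 8) (ZMod 2)))
    (fun i j => by ring) σ
  simp only [lamDiff, map_sub, map_pow, map_add, map_one, map_prod, rename_X, he]
  rw [hP]

lemma aeval_lamDiff {K : Type} [Field K] [Algebra (ZMod 2) K] [CharP K 2]
    (a b c d : K) (s : Fin 8 → K)
    (hs : ∀ x, ∏ j, (x + s j) = x ^ 8 + a * x ^ 4 + b * x ^ 2 + c * x + d)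
    (h4 : aeval s (e 4) = a) (h6 : aeval s (e 6) = b) (h7 : aeval s (e 7) = c) :
    aeval s lamDiff = 0 := by
  have two : (2 : K) = 0 := CharTwo.two_eq_zero
  simp only [lamDiff, map_sub, map_pow, map_add, map_one, map_prod, aeval_X, h4, h6, h7]
  have hrow : ∀ i, ∏ j, (1 + s i + s j) = 1 + a + b + c := by
    intro i
    have h0 := hs (s i)
    rw [Finset.prod_eq_zero (mem_univ i) (CharTwo.add_self_eq_zero _)] at h0
    have e2 : (1 + s i) ^ 2 = 1 + s i ^ 2 := by rw [CharTwo.add_sq, one_pow]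
    have e4 : (1 + s i) ^ 4 = 1 + s i ^ 4 := by
      rw [show (1 + s i) ^ 4 = ((1 + s i) ^ 2) ^ 2 by ring, e2, CharTwo.add_sq]; ring
    have e8 : (1 + s i) ^ 8 = 1 + s i ^ 8 := by
      rw [show (1 + s i) ^ 8 = ((1 + s i) ^ 4) ^ 2 by ring, e4, CharTwo.add_sq]; ring
    rw [hs, e2, e4, e8]
    linear_combination -h0
  have hP := prod_all_pairs (fun i j => 1 + s i + s j) (fun i j => by ring)
    (fun i => by rw [add_assoc, CharTwo.add_self_eq_zero, add_zero])
  simp only [hrow, prod_const, card_univ, Fintype.card_fin] at hP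
  rw [← sq_eq_zero_iff, CharTwo.sub_eq_add, CharTwo.add_sq, ← hP]
  linear_combination (1 + a + b + c) ^ 8 * two

/-- The indices `i` for which `e (i+1)` is killed. -/
def killed (i : Fin 8) : Prop := i = 0 ∨ i = 1 ∨ i = 2 ∨ i = 4

instance : DecidablePred killed := fun i => by unfold killed; infer_instance

/-- in `𝔽₂[t₁,…,t₈]`, `∏_{1≤j<k≤8} (1 + t_j + t_k)` is congruent
to `(1 + e₄ + e₆ + e₇)⁴` modulo the ideal `(e₁, e₂, e₃, e₅)`. -/
theorem lambda2_spin8 :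
    (∏ p ∈ univ.filter (fun p : Fin 8 × Fin 8 => p.1 < p.2),
        (1 + X p.1 + X p.2) : MvPolynomial (Fin 8) (ZMod 2))
      - (1 + e 4 + e 6 + e 7) ^ 4 ∈ Ideal.span {e 1, e 2, e 3, e 5} := by
  change lamDiff ∈ _
  obtain ⟨Q, hQ⟩ := esymmAlgHom_surjective (σ := Fin 8) (n := 8) (ZMod 2) (by simp)
    ⟨lamDiff, lamDiff_symm⟩
  have hQ' : aeval (fun i : Fin 8 => e (i + 1)) Q = lamDiff := by
    have := congrArg Subtype.val hQ
    rwa [esymmAlgHom_apply] at this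
  -- the specialisation of `Q` vanishes
  let R := MvPolynomial (Fin 8) (ZMod 2)
  let z : Fin 8 → R := fun i => if killed i then 0 else X i
  have hz : aeval z Q = 0 := by
    let K := AlgebraicClosure (FractionRing R)
    let φ : R →ₐ[ZMod 2] K := IsScalarTower.toAlgHom (ZMod 2) R K
    have hφ : Function.Injective φ := by
      change Function.Injective (algebraMap R K)
      rw [IsScalarTower.algebraMap_eq R (FractionRing R) K]
      exact (algebraMap (FractionRing R) K).injective.comp (IsFractionRing.injective R _)
    have : CharP K 2 := charP_of_injective_algebraMap (algebraMap (ZMod 2) K).injective 2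
    obtain ⟨s, hs, h1, h2, h3, h4, h5, h6, h7, h8⟩ :=
      exists_roots (φ (X 3)) (φ (X 5)) (φ (X 6)) (φ (X 7))
    apply hφ
    have h := aeval_lamDiff _ _ _ _ s hs h4 h6 h7
    have key : φ.comp (aeval z) = (aeval s).comp (aeval (fun i : Fin 8 => e (i + 1))) := by
      ext i
      fin_cases i <;> simp [z, killed, h1, h2, h3, h4, h5, h6, h7, h8]
    have hk := DFunLike.congr_fun key Q
    rw [AlgHom.comp_apply, AlgHom.comp_apply, hQ', h] at hk
    rw [hk, map_zero]
  -- conclude modulo the ideal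
  set I : Ideal R := Ideal.span {e 1, e 2, e 3, e 5} with hI
  have m1 : e 1 ∈ I := Ideal.subset_span (by simp)
  have m2 : e 2 ∈ I := Ideal.subset_span (by simp)
  have m3 : e 3 ∈ I := Ideal.subset_span (by simp)
  have m5 : e 5 ∈ I := Ideal.subset_span (by simp)
  rw [← Ideal.Quotient.eq_zero_iff_mem] at m1 m2 m3 m5 ⊢
  have key : (Ideal.Quotient.mkₐ (ZMod 2) I).comp (aeval (fun i : Fin 8 => e (i + 1))) =
      ((Ideal.Quotient.mkₐ (ZMod 2) I).comp (aeval (fun i : Fin 8 => e (i + 1)))).comp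
        (aeval z) := by
    ext i
    fin_cases i <;> simp [z, killed, m1, m2, m3, m5]
  have := DFunLike.congr_fun key Q
  simp only [AlgHom.comp_apply, hz, map_zero, hQ'] at this
  exact this
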